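/- (Barrier for the non-degeneracy theorem, proof of Theorem 1.1) There exists a constant c̄ > 0, depending only on N, p, q and m, such that for every c ∈ (0, c̄] the function Φ̂(x,t) := c · ( ‖x‖^{p/(p−1)} + (−t)^{(p−1−q)/((p−1)(1−q))} )^{(p−1)/(p−1−q)}, defined for x ∈ ℝ^N and t < 0, satisfies at every point (x,t) with 0 < ‖x‖ < 1 and −1 < t < 0: the vector field V(y,s) := ‖∇Φ̂(y,s)‖^{p−2} ∇Φ̂(y,s) is differentiable in the space variable at x, ∂_t Φ̂(x,t) exists, and trace(D_x V(x,t)) − ∂_t Φ̂(x,t) ≤ m · Φ̂(x,t)^q. In particular Δ_p Φ̂ − ∂_t Φ̂ − λ₀ Φ̂^q ≤ 0 there for every λ₀ ≥ m. -/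

import Mathlib

noncomputable section

open Set Metric MeasureTheory

/-- Euclidean space `ℝ^N`. -/
abbrev Euc (N : ℕ) := EuclideanSpace ℝ (Fin N)

/-- `s₊^q`: equals `(max s 0)^q` if `s > 0` and `0` otherwise. -/
def plusPowQ (q s : ℝ) : ℝ := if 0 < s then (max s 0) ^ q else 0

/-- The spatial gradient `∇u(x,t)`. -/
def spatialGrad (N : ℕ) (u : Euc N × ℝ → ℝ) (z : Euc N × ℝ) : Euc N :=
  gradient (fun y => u (y, z.2)) z.1

/-- The vector field `V(y,t) = ‖∇u(y,t)‖^(p-2) ∇u(y,t)`. -/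
def pVF (N : ℕ) (p : ℝ) (u : Euc N × ℝ → ℝ) (z : Euc N × ℝ) : Euc N :=
  ‖spatialGrad N u z‖ ^ (p - 2) • spatialGrad N u z

/-- The `p`-Laplacian `Δ_p u` realized as `trace (D_x V)` with `V = ‖∇u‖^(p-2)∇u`. -/
def pLap (N : ℕ) (p : ℝ) (u : Euc N × ℝ → ℝ) (z : Euc N × ℝ) : ℝ :=
  LinearMap.trace ℝ (Euc N) (fderiv ℝ (fun y => pVF N p u (y, z.2)) z.1).toLinearMap

/-- The time derivative `∂ₜ u`. -/
def timeDeriv (N : ℕ) (u : Euc N × ℝ → ℝ) (z : Euc N × ℝ) : ℝ :=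
  deriv (fun t => u (z.1, t)) z.2

/-- `u` is a classical solution of the dead-core equation `Δ_p u - ∂_t u = λ₀ u₊^q` on `D`:
`u` is continuous on `D` and at every point of `D` the spatial gradient and time derivative
exist, `V = ‖∇u‖^(p-2)∇u` is spatially differentiable, and the PDE holds. -/
def IsDCSol (N : ℕ) (p q : ℝ) (lam u : Euc N × ℝ → ℝ) (D : Set (Euc N × ℝ)) : Prop :=
  ContinuousOn u D ∧
  ∀ z ∈ D,
    DifferentiableAt ℝ (fun y => u (y, z.2)) z.1 ∧
    DifferentiableAt ℝ (fun t => u (z.1, t)) z.2 ∧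
    DifferentiableAt ℝ (fun y => pVF N p u (y, z.2)) z.1 ∧
    pLap N p u z - timeDeriv N u z = lam z * plusPowQ q (u z)

/-- The intrinsic scaling exponent `θ = p(1-q)/(p-1-q)`. -/
def thetaV (p q : ℝ) : ℝ := p * (1 - q) / (p - 1 - q)

/-- The intrinsic cylinder `Q_r(x₀,t₀) = B_r(x₀) × (t₀ - r^θ, t₀ + r^θ)`. -/
def cylQ (N : ℕ) (θ r : ℝ) (z0 : Euc N × ℝ) : Set (Euc N × ℝ) :=
  (ball z0.1 r) ×ˢ (Ioo (z0.2 - r ^ θ) (z0.2 + r ^ θ))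

/-- The lower cylinder `Q_r⁻(x₀,t₀) = B_r(x₀) × (t₀ - r^θ, t₀]`. -/
def cylQm (N : ℕ) (θ r : ℝ) (z0 : Euc N × ℝ) : Set (Euc N × ℝ) :=
  (ball z0.1 r) ×ˢ (Ioc (z0.2 - r ^ θ) z0.2)

/-- The upper cylinder `Q_r⁺(x₀,t₀) = B_r(x₀) × [t₀, t₀ + r^θ)`. -/
def cylQp (N : ℕ) (θ r : ℝ) (z0 : Euc N × ℝ) : Set (Euc N × ℝ) :=
  (ball z0.1 r) ×ˢ (Ico z0.2 (z0.2 + r ^ θ))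

/-- The parabolic boundary of `Q_r⁻(x₀,t₀)`:
`(closure(B_r) × {t₀ - r^θ}) ∪ (∂B_r × (t₀ - r^θ, t₀])`. -/
def parBdryQm (N : ℕ) (θ r : ℝ) (z0 : Euc N × ℝ) : Set (Euc N × ℝ) :=
  ((closedBall z0.1 r) ×ˢ ({z0.2 - r ^ θ} : Set ℝ)) ∪
    ((sphere z0.1 r) ×ˢ (Ioc (z0.2 - r ^ θ) z0.2))

/-- The class `𝔍 = 𝔍_p(λ₀,q)(Q₁)`: classical solutions `u` on `Q₁` (for some `λ₀` with
`m ≤ λ₀ ≤ M`) with `0 ≤ u ≤ 1`, `∂ₜ u ≥ 0` on `Q₁` and `u(0,0) = 0`. -/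
def memJ (N : ℕ) (p q m M : ℝ) (u : Euc N × ℝ → ℝ) : Prop :=
  ∃ lam : Euc N × ℝ → ℝ,
    (∀ z ∈ cylQ N (thetaV p q) 1 (0, 0), m ≤ lam z ∧ lam z ≤ M) ∧
    IsDCSol N p q lam u (cylQ N (thetaV p q) 1 (0, 0)) ∧
    (∀ z ∈ cylQ N (thetaV p q) 1 (0, 0), 0 ≤ u z ∧ u z ≤ 1) ∧
    (∀ z ∈ cylQ N (thetaV p q) 1 (0, 0), 0 ≤ timeDeriv N u z) ∧
    u (0, 0) = 0

/-- `S_r[u] = sup over Q_r⁻ of u` (cylinders centered at the origin). -/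
def Sr (N : ℕ) (p q r : ℝ) (u : Euc N × ℝ → ℝ) : ℝ :=
  sSup (u '' cylQm N (thetaV p q) r (0, 0))

/-!
The exponent `a = p / (p - 1)` is conjugate to `p`, so the `p`-flux of a nondecreasing function
`f (‖x‖ ^ a)` is `(f' a) ^ (p - 1) • x`: the powers of `‖x‖` cancel. With
`w = ‖x‖ ^ a + (-t) ^ b` and `Φ = c w ^ k`, the flux is a multiple of `w ^ ((k - 1) (p - 1)) • x`,
and since `‖x‖ ^ a ≤ w` and `(-t) ^ b ≤ w` one gets
`Δ_p Φ ≤ C c ^ (p - 1) w ^ ((k - 1) (p - 1))` and `-∂_t Φ ≤ k b c w ^ (k - 1 / b)`.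
The exponents `k` and `b` are those for which both powers of `w` equal `w ^ (k q)`, the power in
`Φ ^ q = c ^ q w ^ (k q)`. As `q < p - 1` and `q < 1`, the factor `c ^ q` dominates for small `c`.
-/

open Filter Topology

section RealPowers

variable {a τ ρ : ℝ}

lemma hasDerivAt_const_mul_add_rpow (c k : ℝ) (h : 0 < ρ + τ) :
    HasDerivAt (fun r => c * (r + τ) ^ k) (c * k * (ρ + τ) ^ (k - 1)) ρ := by
  convert! (((hasDerivAt_id ρ).add_const τ).rpow_const (p := k) (.inl h.ne')).const_mul c using 1
  simp only [id_eq]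
  ring

lemma mul_rpow_mul_rpow {s w : ℝ} (hs : 0 ≤ s * a) (hw : 0 ≤ w) (j e : ℝ) :
    (s * w ^ j * a) ^ e = (s * a) ^ e * w ^ (j * e) := by
  rw [mul_right_comm, Real.mul_rpow hs (by positivity), ← Real.rpow_mul hw]

lemma hasDerivAt_mul_add_rpow_mul_rpow {s : ℝ} (hs : 0 ≤ s * a) (h : 0 < ρ + τ) (j e : ℝ) :
    HasDerivAt (fun r => (s * (r + τ) ^ j * a) ^ e)
      ((s * a) ^ e * (j * e) * (ρ + τ) ^ (j * e - 1)) ρ := by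
  refine (hasDerivAt_const_mul_add_rpow _ _ h).congr_of_eventuallyEq ?_
  filter_upwards [lt_mem_nhds (neg_lt_iff_pos_add.2 h)] with r hr
  exact mul_rpow_mul_rpow hs (neg_lt_iff_pos_add.1 hr).le j e

lemma mul_rpow_sub_one_mul_le {β R w : ℝ} (hw : 0 < w) (hR : 0 ≤ R) (hRw : R ≤ w) :
    β * w ^ (β - 1) * R ≤ |β| * w ^ β :=
  calc β * w ^ (β - 1) * R ≤ |β| * w ^ (β - 1) * w := by
        gcongr
        exact le_abs_self β
    _ = |β| * w ^ β := by rw [mul_assoc, ← Real.rpow_add_one hw.ne', sub_add_cancel]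

lemma rpow_sub_one_le_rpow_one_sub_inv {b T w : ℝ} (hT : 0 ≤ T) (hb : 1 ≤ b) (hTw : T ^ b ≤ w) :
    T ^ (b - 1) ≤ w ^ (1 - b⁻¹) :=
  have hb₀ : 0 < b := one_pos.trans_le hb
  calc T ^ (b - 1) = (T ^ b) ^ (1 - b⁻¹) := by
        rw [← Real.rpow_mul hT, mul_one_sub, mul_inv_cancel₀ hb₀.ne']
    _ ≤ w ^ (1 - b⁻¹) :=
        Real.rpow_le_rpow (by positivity) hTw (sub_nonneg.2 (inv_le_one_of_one_le₀ hb))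

lemma exists_forall_mul_rpow_add_mul_rpow_le {q r s m : ℝ} (hr : q < r) (hs : q < s) (hm : 0 < m)
    (A B : ℝ) :
    ∃ ε > 0, ∀ c, 0 < c → c ≤ ε → A * c ^ r + B * c ^ s ≤ m * c ^ q := by
  have cont : ContinuousAt (fun c : ℝ => A * c ^ (r - q) + B * c ^ (s - q)) 0 :=
    ((Real.continuousAt_rpow_const 0 _ (.inr (sub_pos.2 hr).le)).const_mul A).add
      ((Real.continuousAt_rpow_const 0 _ (.inr (sub_pos.2 hs).le)).const_mul B)
  have small : ∀ᶠ c in 𝓝[>] (0 : ℝ), A * c ^ (r - q) + B * c ^ (s - q) < m := by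
    refine nhdsWithin_le_nhds (cont.eventually_lt_const ?_)
    simpa [Real.zero_rpow (sub_pos.2 hr).ne', Real.zero_rpow (sub_pos.2 hs).ne'] using hm
  obtain ⟨ε, hε, hsub⟩ := mem_nhdsGT_iff_exists_Ioc_subset.1 small
  refine ⟨ε, hε, fun c hc hcε => ?_⟩
  have hlt : A * c ^ (r - q) + B * c ^ (s - q) < m := hsub ⟨hc, hcε⟩
  calc A * c ^ r + B * c ^ s = (A * c ^ (r - q) + B * c ^ (s - q)) * c ^ q := by
        rw [add_mul, mul_assoc, mul_assoc, ← Real.rpow_add hc, ← Real.rpow_add hc, sub_add_cancel,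
          sub_add_cancel]
    _ ≤ m * c ^ q := by gcongr

end RealPowers

section RadialFunctions

variable {E : Type*} [NormedAddCommGroup E] [InnerProductSpace ℝ E] {a : ℝ} {x : E}

lemma norm_rpow_sub_two_mul_inner_self (hx : x ≠ 0) :
    ‖x‖ ^ (a - 2) * inner ℝ x x = ‖x‖ ^ a := by
  rw [real_inner_self_eq_norm_sq, ← Real.rpow_natCast, ← Real.rpow_add (norm_pos_iff.2 hx)]
  norm_num

lemma hasFDerivAt_comp_norm_rpow (ha : 1 < a) {f : ℝ → ℝ} {f' : ℝ}
    (hf : HasDerivAt f f' (‖x‖ ^ a)) :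
    HasFDerivAt (fun y : E => f (‖y‖ ^ a)) ((f' * a * ‖x‖ ^ (a - 2)) • innerSL ℝ x) x := by
  have h := hf.comp_hasFDerivAt x (hasFDerivAt_norm_rpow x ha)
  rwa [smul_smul, ← mul_assoc] at h

lemma hasGradientAt_comp_norm_rpow [CompleteSpace E] (ha : 1 < a) {f : ℝ → ℝ} {f' : ℝ}
    (hf : HasDerivAt f f' (‖x‖ ^ a)) :
    HasGradientAt (fun y : E => f (‖y‖ ^ a)) ((f' * a * ‖x‖ ^ (a - 2)) • x) x := by
  rw [hasGradientAt_iff_hasFDerivAt, map_smul]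
  exact hasFDerivAt_comp_norm_rpow ha hf

lemma norm_rpow_smul_self_of_holderConjugate {p s : ℝ} (hpa : p.HolderConjugate a) (hs : 0 ≤ s)
    (hx : x ≠ 0) :
    ‖(s * ‖x‖ ^ (a - 2)) • x‖ ^ (p - 2) • ((s * ‖x‖ ^ (a - 2)) • x) = s ^ (p - 1) • x := by
  have hr : 0 < ‖x‖ := norm_pos_iff.2 hx
  have norm_eq : ‖(s * ‖x‖ ^ (a - 2)) • x‖ = s * ‖x‖ ^ (a - 1) := by
    rw [norm_smul, Real.norm_of_nonneg (by positivity), mul_assoc, ← Real.rpow_add_one hr.ne']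
    ring_nf
  have s_pow : s ^ (p - 1) = s ^ (p - 2) * s := by
    rw [← Real.rpow_add_one' hs (by linarith [hpa.sub_one_pos])]
    ring_nf
  have norm_pow : ‖x‖ ^ ((a - 1) * (p - 2)) * ‖x‖ ^ (a - 2) = 1 := by
    rw [← Real.rpow_add hr, show (a - 1) * (p - 2) + (a - 2) = 0 by
      linear_combination hpa.mul_eq_add, Real.rpow_zero]
  rw [norm_eq, Real.mul_rpow hs (by positivity), ← Real.rpow_mul hr.le, smul_smul, s_pow]
  congr 1
  linear_combination s ^ (p - 2) * s * norm_pow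

lemma trace_smul_id_add_smulRight [FiniteDimensional ℝ E] (r : ℝ) (φ : E →L[ℝ] ℝ) (x : E) :
    LinearMap.trace ℝ E (r • ContinuousLinearMap.id ℝ E + φ.smulRight x).toLinearMap =
      Module.finrank ℝ E * r + φ x := by
  simp [mul_comm]

end RadialFunctions

section RadialPLaplacian

variable {N : ℕ} {p a t : ℝ} {u : Euc N × ℝ → ℝ} {f f' : ℝ → ℝ} {x : Euc N}

lemma pVF_comp_norm_rpow {f₁ : ℝ} (hpa : p.HolderConjugate a) (hu : ∀ y, u (y, t) = f (‖y‖ ^ a))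
    (hf : HasDerivAt f f₁ (‖x‖ ^ a)) (hf₁ : 0 ≤ f₁) (hx : x ≠ 0) :
    pVF N p u (x, t) = (f₁ * a) ^ (p - 1) • x := by
  have grad_eq : spatialGrad N u (x, t) = (f₁ * a * ‖x‖ ^ (a - 2)) • x := by
    simp only [spatialGrad, hu]
    exact (hasGradientAt_comp_norm_rpow hpa.symm.lt hf).gradient
  rw [pVF, grad_eq, norm_rpow_smul_self_of_holderConjugate hpa (mul_nonneg hf₁ hpa.symm.nonneg) hx]

lemma hasFDerivAt_pVF_comp_norm_rpow {g' : ℝ} (hpa : p.HolderConjugate a)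
    (hu : ∀ y, u (y, t) = f (‖y‖ ^ a)) (hf : ∀ ρ > 0, HasDerivAt f (f' ρ) ρ)
    (hf' : ∀ ρ > 0, 0 ≤ f' ρ) (hx : x ≠ 0)
    (hg : HasDerivAt (fun ρ => (f' ρ * a) ^ (p - 1)) g' (‖x‖ ^ a)) :
    HasFDerivAt (fun y => pVF N p u (y, t))
      ((f' (‖x‖ ^ a) * a) ^ (p - 1) • ContinuousLinearMap.id ℝ (Euc N) +
        ((g' * a * ‖x‖ ^ (a - 2)) • innerSL ℝ x).smulRight x) x := by
  have h := (hasFDerivAt_comp_norm_rpow hpa.symm.lt hg).smul (hasFDerivAt_id x)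
  refine h.congr_of_eventuallyEq ?_
  filter_upwards [isOpen_ne.mem_nhds hx] with y hy
  have hρ : 0 < ‖y‖ ^ a := Real.rpow_pos_of_pos (norm_pos_iff.2 hy) a
  exact pVF_comp_norm_rpow hpa hu (hf _ hρ) (hf' _ hρ) hy

lemma pLap_comp_norm_rpow {g' : ℝ} (hpa : p.HolderConjugate a)
    (hu : ∀ y, u (y, t) = f (‖y‖ ^ a)) (hf : ∀ ρ > 0, HasDerivAt f (f' ρ) ρ)
    (hf' : ∀ ρ > 0, 0 ≤ f' ρ) (hx : x ≠ 0)
    (hg : HasDerivAt (fun ρ => (f' ρ * a) ^ (p - 1)) g' (‖x‖ ^ a)) :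
    pLap N p u (x, t) = N * (f' (‖x‖ ^ a) * a) ^ (p - 1) + g' * a * ‖x‖ ^ a := by
  rw [pLap, (hasFDerivAt_pVF_comp_norm_rpow hpa hu hf hf' hx hg).fderiv,
    trace_smul_id_add_smulRight, finrank_euclideanSpace_fin, smul_apply,
    innerSL_apply_apply, smul_eq_mul, mul_assoc (g' * a), norm_rpow_sub_two_mul_inner_self hx]

end RadialPLaplacian

/-- The quantity `‖x‖ ^ a + (-t) ^ b`, comparing the sizes of `x` and of the time `-t` elapsed
until `0`. It is meant for `t < 0`, where the base `-t` of the real power is positive. -/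
def backwardGauge {N : ℕ} (a b : ℝ) (z : Euc N × ℝ) : ℝ := ‖z.1‖ ^ a + (-z.2) ^ b

/-- The barrier `c (‖x‖ ^ a + (-t) ^ b) ^ k`. The function `Φ̂` is the case `a = p / (p - 1)`,
`b = (p - 1 - q) / ((p - 1) (1 - q))`, `k = (p - 1) / (p - 1 - q)`. -/
def powerBarrier {N : ℕ} (a b k c : ℝ) (z : Euc N × ℝ) : ℝ := c * backwardGauge a b z ^ k

section PowerBarrier

variable {N : ℕ} {p a b c k t : ℝ} {x : Euc N}

lemma backwardGauge_pos (hx : x ≠ 0) (ht : t < 0) : 0 < backwardGauge a b (x, t) :=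
  add_pos (Real.rpow_pos_of_pos (norm_pos_iff.2 hx) a) (Real.rpow_pos_of_pos (neg_pos.2 ht) b)

lemma norm_rpow_le_backwardGauge (ht : t ≤ 0) : ‖x‖ ^ a ≤ backwardGauge a b (x, t) :=
  le_add_of_nonneg_right (Real.rpow_nonneg (neg_nonneg.2 ht) b)

lemma neg_rpow_le_backwardGauge : (-t) ^ b ≤ backwardGauge a b (x, t) :=
  le_add_of_nonneg_left (Real.rpow_nonneg (norm_nonneg x) a)

theorem differentiableAt_pVF_powerBarrier (hpa : p.HolderConjugate a) (hk : 0 ≤ k) (hc : 0 ≤ c)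
    (hx : x ≠ 0) (ht : t < 0) :
    DifferentiableAt ℝ (fun y => pVF N p (powerBarrier a b k c) (y, t)) x := by
  have hτ : 0 < (-t) ^ b := Real.rpow_pos_of_pos (neg_pos.2 ht) b
  have hs : 0 ≤ c * k * a := mul_nonneg (mul_nonneg hc hk) hpa.symm.nonneg
  have hw : 0 < ‖x‖ ^ a + (-t) ^ b := backwardGauge_pos hx ht
  exact (hasFDerivAt_pVF_comp_norm_rpow hpa (fun _ => rfl)
    (fun ρ hρ => hasDerivAt_const_mul_add_rpow c k (add_pos hρ hτ))
    (fun ρ hρ => by positivity) hx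
    (hasDerivAt_mul_add_rpow_mul_rpow hs hw _ _)).differentiableAt

theorem pLap_powerBarrier (hpa : p.HolderConjugate a) (hk : 0 ≤ k) (hc : 0 ≤ c)
    (hx : x ≠ 0) (ht : t < 0) :
    pLap N p (powerBarrier a b k c) (x, t) =
      (c * k * a) ^ (p - 1) * (N * backwardGauge a b (x, t) ^ ((k - 1) * (p - 1)) +
        (k - 1) * (p - 1) * backwardGauge a b (x, t) ^ ((k - 1) * (p - 1) - 1) * ‖x‖ ^ a * a) := by
  have hτ : 0 < (-t) ^ b := Real.rpow_pos_of_pos (neg_pos.2 ht) b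
  have hw : 0 < ‖x‖ ^ a + (-t) ^ b := backwardGauge_pos hx ht
  have hs : 0 ≤ c * k * a := mul_nonneg (mul_nonneg hc hk) hpa.symm.nonneg
  rw [pLap_comp_norm_rpow hpa (fun _ => rfl)
    (fun ρ hρ => hasDerivAt_const_mul_add_rpow c k (add_pos hρ hτ))
    (fun ρ hρ => by positivity) hx (hasDerivAt_mul_add_rpow_mul_rpow hs hw _ _),
    mul_rpow_mul_rpow hs hw.le, backwardGauge]
  ring

theorem hasDerivAt_powerBarrier_time (hx : x ≠ 0) (ht : t < 0) :
    HasDerivAt (fun s => powerBarrier a b k c (x, s))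
      (-(c * (k * b) * (backwardGauge a b (x, t) ^ (k - 1) * (-t) ^ (b - 1)))) t := by
  have h := ((((hasDerivAt_neg t).rpow_const (p := b) (.inl (neg_pos.2 ht).ne')).const_add
    (‖x‖ ^ a)).rpow_const (p := k) (.inl (backwardGauge_pos hx ht).ne')).const_mul c
  refine h.congr_deriv ?_
  rw [backwardGauge]
  ring

theorem pLap_powerBarrier_le (hpa : p.HolderConjugate a) (hk : 0 ≤ k) (hc : 0 ≤ c)
    (hx : x ≠ 0) (ht : t < 0) :
    pLap N p (powerBarrier a b k c) (x, t) ≤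
      (k * a) ^ (p - 1) * (N + |(k - 1) * (p - 1)| * a) * c ^ (p - 1) *
        backwardGauge a b (x, t) ^ ((k - 1) * (p - 1)) := by
  have ha : 0 ≤ a := hpa.symm.nonneg
  have radial_le := mul_rpow_sub_one_mul_le (β := (k - 1) * (p - 1))
    (backwardGauge_pos (a := a) (b := b) hx ht) (by positivity) (norm_rpow_le_backwardGauge ht.le)
  rw [pLap_powerBarrier hpa hk hc hx ht, mul_assoc c, Real.mul_rpow hc (by positivity)]
  grw [radial_le]
  exact le_of_eq (by ring)

theorem neg_timeDeriv_powerBarrier_le (hb : 1 ≤ b) (hk : 0 ≤ k) (hc : 0 ≤ c)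
    (hx : x ≠ 0) (ht : t < 0) :
    -timeDeriv N (powerBarrier a b k c) (x, t) ≤
      k * b * c * backwardGauge a b (x, t) ^ (k - b⁻¹) := by
  have hw : 0 < backwardGauge a b (x, t) := backwardGauge_pos hx ht
  have time_le := rpow_sub_one_le_rpow_one_sub_inv (neg_nonneg.2 ht.le) hb
    (neg_rpow_le_backwardGauge (x := x) (a := a))
  rw [timeDeriv, (hasDerivAt_powerBarrier_time hx ht).deriv, neg_neg]
  grw [time_le]
  rw [← Real.rpow_add hw, sub_add_sub_cancel]
  exact le_of_eq (by ring)

theorem pLap_sub_timeDeriv_powerBarrier_le {β : ℝ} (hpa : p.HolderConjugate a) (hb : 1 ≤ b)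
    (hk : 0 ≤ k) (hc : 0 ≤ c) (flux_exponent : (k - 1) * (p - 1) = β)
    (time_exponent : k - b⁻¹ = β) (hx : x ≠ 0) (ht : t < 0) :
    pLap N p (powerBarrier a b k c) (x, t) - timeDeriv N (powerBarrier a b k c) (x, t) ≤
      ((k * a) ^ (p - 1) * (N + |β| * a) * c ^ (p - 1) + k * b * c) *
        backwardGauge a b (x, t) ^ β := by
  have pLap_le := pLap_powerBarrier_le (b := b) hpa hk hc hx ht
  have time_le := neg_timeDeriv_powerBarrier_le (a := a) hb hk hc hx ht
  rw [flux_exponent] at pLap_le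
  rw [time_exponent] at time_le
  linarith

lemma powerBarrier_rpow (hc : 0 ≤ c) (hx : x ≠ 0) (ht : t < 0) (q : ℝ) :
    powerBarrier a b k c (x, t) ^ q = c ^ q * backwardGauge a b (x, t) ^ (k * q) := by
  have hw : 0 < backwardGauge a b (x, t) := backwardGauge_pos hx ht
  rw [powerBarrier, Real.mul_rpow hc (by positivity), ← Real.rpow_mul hw.le]

end PowerBarrier

-- `0 ≤ q * (p - 2)` says that the exponent of `-t` is at least `1`.
theorem barrier_nondegeneracy_general (N : ℕ) {p q m : ℝ} (hp : 1 < p) (hq : q < 1)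
    (hpq : 0 ≤ q * (p - 2)) (hm : 0 < m) :
    ∃ cbar : ℝ, 0 < cbar ∧
      ∀ c : ℝ, 0 < c → c ≤ cbar →
      ∀ Phi : Euc N × ℝ → ℝ,
        (∀ z : Euc N × ℝ, Phi z =
          c * (‖z.1‖ ^ (p / (p - 1)) +
            (-z.2) ^ ((p - 1 - q) / ((p - 1) * (1 - q)))) ^ ((p - 1) / (p - 1 - q))) →
        ∀ (x : Euc N) (t : ℝ), 0 < ‖x‖ → t < 0 →
          DifferentiableAt ℝ (fun y => pVF N p Phi (y, t)) x ∧
          DifferentiableAt ℝ (fun s => Phi (x, s)) t ∧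
          pLap N p Phi (x, t) - timeDeriv N Phi (x, t) ≤ m * Phi (x, t) ^ q := by
  have hpa : p.HolderConjugate (p / (p - 1)) := (Real.holderConjugate_iff_eq_conjExponent hp).2 rfl
  have hqp : q < p - 1 := by nlinarith
  have hp₁ : 0 < p - 1 := sub_pos.2 hp
  have hqp₁ : 0 < p - 1 - q := sub_pos.2 hqp
  have hq₁ : 0 < 1 - q := sub_pos.2 hq
  set a := p / (p - 1)
  set b := (p - 1 - q) / ((p - 1) * (1 - q)) with b_def
  set k := (p - 1) / (p - 1 - q) with k_def
  have hk : 0 ≤ k := by positivity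
  have hb : 1 ≤ b := by
    rw [b_def, one_le_div (mul_pos hp₁ hq₁)]
    linarith
  have flux_exponent : (k - 1) * (p - 1) = k * q := by
    rw [k_def]
    field_simp
    ring
  have time_exponent : k - b⁻¹ = k * q := by
    rw [k_def, b_def]
    field_simp
    ring
  obtain ⟨cbar, hcbar, small⟩ := exists_forall_mul_rpow_add_mul_rpow_le hqp hq hm
    ((k * a) ^ (p - 1) * (N + |k * q| * a)) (k * b)
  refine ⟨cbar, hcbar, fun c hc hc_le Phi hPhi x t hx ht => ?_⟩
  obtain rfl : Phi = powerBarrier a b k c := funext hPhi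
  rw [norm_pos_iff] at hx
  refine ⟨differentiableAt_pVF_powerBarrier hpa hk hc.le hx ht,
    (hasDerivAt_powerBarrier_time hx ht).differentiableAt, ?_⟩
  have hw : 0 < backwardGauge a b (x, t) := backwardGauge_pos hx ht
  have bound := small c hc hc_le
  rw [Real.rpow_one] at bound
  grw [pLap_sub_timeDeriv_powerBarrier_le hpa hb hk hc.le flux_exponent time_exponent hx ht, bound,
    powerBarrier_rpow hc.le hx ht, mul_assoc]

/-- **Barrier for the non-degeneracy theorem (proof of Theorem 1.1).** -/
theorem barrier_nondegeneracy
    (N : ℕ) (hN : 1 ≤ N) (p q m : ℝ)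
    (hp : 2 ≤ p) (hq0 : 0 ≤ q) (hq1 : q < 1) (hm : 0 < m) :
    ∃ cbar : ℝ, 0 < cbar ∧
      ∀ c : ℝ, 0 < c → c ≤ cbar →
      ∀ Phi : Euc N × ℝ → ℝ,
        (∀ z : Euc N × ℝ, Phi z =
          c * (‖z.1‖ ^ (p / (p - 1)) +
            (-z.2) ^ ((p - 1 - q) / ((p - 1) * (1 - q)))) ^ ((p - 1) / (p - 1 - q))) →
        ∀ (x : Euc N) (t : ℝ), 0 < ‖x‖ → ‖x‖ < 1 → -1 < t → t < 0 →
          DifferentiableAt ℝ (fun y => pVF N p Phi (y, t)) x ∧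
          DifferentiableAt ℝ (fun s => Phi (x, s)) t ∧
          pLap N p Phi (x, t) - timeDeriv N Phi (x, t) ≤ m * Phi (x, t) ^ q := by
  obtain ⟨cbar, hcbar, H⟩ := barrier_nondegeneracy_general N (one_lt_two.trans_le hp) hq1
    (mul_nonneg hq0 (sub_nonneg.2 hp)) hm
  exact ⟨cbar, hcbar, fun c hc hc_le Phi hPhi x t hx _ _ => H c hc hc_le Phi hPhi x t hx⟩
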